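/- arXiv:1711.02883 — 2 statements merged into one kernel-verified Lean document; each statement's English description precedes it below -/
import Mathlib

section
/- Let p, r be positive integers, let D_1, …, D_p be dictionaries (finite nonempty families of atoms), and let d : {1, …, p} × {1, …, r} → ℝ be the columnwise nearest-atom cost, d(i, j) = min_k c(j, D_i(:, k)) for a cost function c. Let ℓ_1, …, ℓ_p be nonnegative integers (lower bounds) with Σ_{i=1}^p ℓ_i ≤ r. Define an augmented instance with p + 1 dictionaries by setting D_{p+1} to be the concatenation of D_1, …, D_p, so that d(p+1, j) = min_{1 ≤ i ≤ p} d(i, j), and exact counts ℓ_1, …, ℓ_p, ℓ_{p+1} := r − Σ_{i=1}^p ℓ_i. Then the minimum of Σ_{j=1}^r d(τ(j), j) over labelings τ : {1, …, r} → {1, …, p} satisfying |τ^{-1}(i)| ≥ ℓ_i for every i equals the minimum of Σ_{j=1}^r d(τ'(j), j) over labelings τ' : {1, …, r} → {1, …, p+1} satisfying |τ'^{-1}(i)| = ℓ_i for every i ≤ p and |τ'^{-1}(p+1)| = r − Σ_{i=1}^p ℓ_i. In other words, the lower-bound variant of the multiple-dictionary selection problem is equivalent to an exact-count instance obtained by adjoining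 the concatenated dictionary. -/
/-- A labeling meeting lower bounds `ℓ i` can be relabeled, by moving surplus columns to an extra
label, so that each original label is used exactly `ℓ i` times. -/
lemma exists_exact_relabeling {p r : ℕ} (τ : Fin r → Fin p) (ℓ : Fin p → ℕ)
    (hτ : ∀ i, ℓ i ≤ (Finset.univ.filter (fun j => τ j = i)).card) :
    ∃ τ' : Fin r → Fin (p + 1),
      (∀ i : Fin p, (Finset.univ.filter (fun j => τ' j = i.castSucc)).card = ℓ i) ∧
      ∀ j, τ' j = (τ j).castSucc ∨ τ' j = Fin.last p := by
  choose s hs hcard using fun i => Finset.exists_subset_card_eq (hτ i)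
  refine ⟨fun j => if j ∈ s (τ j) then (τ j).castSucc else Fin.last p, fun i => ?_, fun j => ?_⟩
  · rw [← hcard i]
    congr 1
    ext j
    have hj : j ∈ s i → τ j = i := fun h => by simpa using hs i h
    by_cases hmem : j ∈ s (τ j)
    · simp only [Finset.mem_filter, Finset.mem_univ, true_and, hmem, if_true, Fin.castSucc_inj]
      exact ⟨fun h => h ▸ hmem, hj⟩
    · simp only [Finset.mem_filter, Finset.mem_univ, true_and, hmem, if_false]
      exact ⟨fun h => absurd h.symm (Fin.castSucc_ne_last i),
        fun h => absurd ((hj h).symm ▸ h) hmem⟩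
  · by_cases hmem : j ∈ s (τ j) <;> simp [hmem]

/-- The fiber over the last label contains exactly the columns not counted by the other fibers. -/
lemma card_fiber_last {p r : ℕ} (τ' : Fin r → Fin (p + 1)) :
    (Finset.univ.filter (fun j => τ' j = Fin.last p)).card =
      r - ∑ i : Fin p, (Finset.univ.filter (fun j => τ' j = i.castSucc)).card := by
  have h := Finset.card_eq_sum_card_fiberwise (f := τ') (s := Finset.univ) (t := Finset.univ)
    (fun _ _ => by simp)
  rw [Fin.sum_univ_castSucc, Finset.card_univ, Fintype.card_fin] at h
  omega

/-- The lower-bound variant of the multiple-dictionary selection problem (at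
least `ℓ i` columns served by dictionary `D i`) is equivalent to an exact-count
instance obtained by adjoining a `(p+1)`-st dictionary, the concatenation of
`D 1, …, D p` (modeled by the sigma type `Σ i, ι i`), with exact counts
`ℓ 1, …, ℓ p` and `r - ∑ i, ℓ i` for the concatenated dictionary. -/
theorem lower_bound_selection_eq_exact_count_with_concatenated_dictionary
    (m p r : ℕ) (hp : 0 < p) (hr : 0 < r)
    (ι : Fin p → Type) [∀ i, Fintype (ι i)] [∀ i, Nonempty (ι i)]
    (D : (i : Fin p) → ι i → (Fin m → ℝ))
    (A : Fin r → (Fin m → ℝ))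
    (c : Fin r → (Fin m → ℝ) → ℝ)
    (dcost : Fin p → Fin r → ℝ)
    (hdcost : ∀ (i : Fin p) (j : Fin r), dcost i j = ⨅ k : ι i, c j (D i k))
    (dcost' : Fin (p + 1) → Fin r → ℝ)
    (hdcost'_cast : ∀ (i : Fin p) (j : Fin r), dcost' i.castSucc j = dcost i j)
    (hdcost'_last : ∀ j : Fin r,
      dcost' (Fin.last p) j = ⨅ s : Σ i : Fin p, ι i, c j (D s.1 s.2))
    (ℓ : Fin p → ℕ) (hℓ : ∑ i : Fin p, ℓ i ≤ r) :
    sInf {s : ℝ | ∃ τ : Fin r → Fin p,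
        (∀ i : Fin p,
          ℓ i ≤ (Finset.univ.filter (fun j : Fin r => τ j = i)).card) ∧
        s = ∑ j : Fin r, dcost (τ j) j} =
      sInf {s : ℝ | ∃ τ' : Fin r → Fin (p + 1),
        (∀ i : Fin p,
          (Finset.univ.filter (fun j : Fin r => τ' j = i.castSucc)).card = ℓ i) ∧
        (Finset.univ.filter (fun j : Fin r => τ' j = Fin.last p)).card
          = r - ∑ i : Fin p, ℓ i ∧
        s = ∑ j : Fin r, dcost' (τ' j) j} := by
  have last_le (i : Fin p) (j : Fin r) : dcost' (Fin.last p) j ≤ dcost i j := by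
    rw [hdcost'_last, hdcost]
    exact le_ciInf fun k => ciInf_le (f := fun s : Σ i : Fin p, ι i => c j (D s.1 s.2))
      (Set.finite_range _).bddBelow ⟨i, k⟩
  have exists_le_last (j : Fin r) : ∃ i, dcost i j ≤ dcost' (Fin.last p) j := by
    have : Nonempty (Σ i : Fin p, ι i) := ⟨⟨⟨0, hp⟩, Classical.arbitrary _⟩⟩
    obtain ⟨⟨i, k⟩, hk⟩ :=
      exists_eq_ciInf_of_finite (f := fun s : Σ i : Fin p, ι i => c j (D s.1 s.2))
    refine ⟨i, ?_⟩
    rw [hdcost'_last, ← hk, hdcost]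
    exact ciInf_le (Set.finite_range _).bddBelow k
  apply csInf_eq_csInf_of_forall_exists_le
  · rintro _ ⟨τ, hτ, rfl⟩
    obtain ⟨τ', hcard, hτ'⟩ := exists_exact_relabeling τ ℓ hτ
    refine ⟨_, ⟨τ', hcard, ?_, rfl⟩, Finset.sum_le_sum fun j _ => ?_⟩
    · simp only [card_fiber_last, hcard]
    · rcases hτ' j with h | h
      · rw [h, hdcost'_cast]
      · rw [h]
        exact last_le _ _
  · rintro _ ⟨τ', hcard, -, rfl⟩
    choose best hbest using exists_le_last
    refine ⟨_, ⟨fun j => Fin.lastCases (motive := fun _ => Fin p) (best j) id (τ' j),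
      fun i => ?_, rfl⟩, Finset.sum_le_sum fun j _ => ?_⟩
    · rw [← hcard i]
      refine Finset.card_le_card fun j hj => ?_
      simp only [Finset.mem_filter, Finset.mem_univ, true_and] at hj ⊢
      simp [hj]
    · beta_reduce
      induction τ' j using Fin.lastCases with
      | last => simpa using hbest j
      | cast i => simp [hdcost'_cast]
end

section
/- Let D_1, …, D_p be dictionaries whose atoms all have unit Euclidean norm, and let A_1, …, A_r ∈ ℝ^m be columns all having the same Euclidean norm ρ > 0. Define the cosine cost d_cos(i, j) = min_k (1 − ⟨A_j, D_i(:,k)⟩/(‖A_j‖₂‖D_i(:,k)‖₂)) and the least-squares cost d_ls(i, j) = min_k ‖A_j − D_i(:,k)‖₂². Then d_ls(i, j) = 2ρ · d_cos(i, j) + (ρ − 1)² for all i, j, and consequently, over any feasibility set S of labelings τ : {1, …, r} → {1, …, p}, the assignment problem with weights d_cos and the assignment problem with weights d_ls have exactly the same sets of optimal labelings. In this sense, the normalized inner product, plugged into the assignment problem, provides the best solution for the selected index sets in the least-squares sense when atoms are normalized. -/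
open RealInnerProductSpace

/-- For a unit vector `y` and a nonzero vector `x`, the squared distance is an increasing affine
function of the normalized-inner-product distance. -/
theorem norm_sub_sq_eq_cosine_distance {E : Type*} [NormedAddCommGroup E] [InnerProductSpace ℝ E]
    {x y : E} (hx : x ≠ 0) (hy : ‖y‖ = 1) :
    ‖x - y‖ ^ 2 = 2 * ‖x‖ * (1 - ⟪x, y⟫ / (‖x‖ * ‖y‖)) + (‖x‖ - 1) ^ 2 := by
  have hx' : ‖x‖ ≠ 0 := norm_ne_zero_iff.mpr hx
  rw [norm_sub_sq_real, hy]
  field_simp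
  ring

/-- An increasing affine map commutes with the infimum of a finite nonempty family. -/
theorem ciInf_mul_add_of_nonneg {κ : Type*} [Finite κ] [Nonempty κ] (f : κ → ℝ) {a : ℝ}
    (ha : 0 ≤ a) (b : ℝ) : ⨅ k, (a * f k + b) = a * (⨅ k, f k) + b := by
  rw [Real.mul_iInf_of_nonneg ha, ciInf_add (Set.finite_range _).bddBelow]

/-- For unit-norm atoms and columns of common norm `ρ > 0`, the least-squares
nearest-atom cost and the cosine (normalized-inner-product) nearest-atom cost
are related by `d_ls i j = 2ρ · d_cos i j + (ρ - 1)²`; consequently, over any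
feasibility set of labelings, the assignment problems with weights `d_cos` and
`d_ls` have exactly the same optimal labelings. -/
theorem cosine_cost_vs_least_squares_cost
    (m p r : ℕ)
    (ι : Fin p → Type) [∀ i, Fintype (ι i)] [∀ i, Nonempty (ι i)]
    (D : (i : Fin p) → ι i → EuclideanSpace ℝ (Fin m))
    (hD : ∀ (i : Fin p) (k : ι i), ‖D i k‖ = 1)
    (A : Fin r → EuclideanSpace ℝ (Fin m))
    (ρ : ℝ) (hρ : 0 < ρ) (hA : ∀ j : Fin r, ‖A j‖ = ρ)
    (dcos dls : Fin p → Fin r → ℝ)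
    (hdcos : ∀ (i : Fin p) (j : Fin r),
      dcos i j = ⨅ k : ι i, (1 - ⟪A j, D i k⟫ / (‖A j‖ * ‖D i k‖)))
    (hdls : ∀ (i : Fin p) (j : Fin r),
      dls i j = ⨅ k : ι i, ‖A j - D i k‖ ^ 2) :
    (∀ (i : Fin p) (j : Fin r), dls i j = 2 * ρ * dcos i j + (ρ - 1) ^ 2) ∧
    (∀ (S : Set (Fin r → Fin p)) (τ : Fin r → Fin p), τ ∈ S →
      ((∀ τ' ∈ S, ∑ j : Fin r, dcos (τ j) j ≤ ∑ j : Fin r, dcos (τ' j) j) ↔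
        (∀ τ' ∈ S, ∑ j : Fin r, dls (τ j) j ≤ ∑ j : Fin r, dls (τ' j) j))) := by
  have cost_eq : ∀ (i : Fin p) (j : Fin r), dls i j = 2 * ρ * dcos i j + (ρ - 1) ^ 2 := by
    intro i j
    have hAj : A j ≠ 0 := norm_ne_zero_iff.mp ((hA j).trans_ne hρ.ne')
    rw [hdls, hdcos, ← ciInf_mul_add_of_nonneg _ (by positivity)]
    refine iInf_congr fun k => ?_
    rw [norm_sub_sq_eq_cosine_distance hAj (hD i k), hA j]
  refine ⟨cost_eq, fun S τ _ => forall₂_congr fun τ' _ => ?_⟩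
  simp only [cost_eq, Finset.sum_add_distrib, ← Finset.mul_sum]
  rw [add_le_add_iff_right, mul_le_mul_iff_right₀ (by positivity)]
end
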